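/- As m → ∞, the sum Σ_{k=1}^m 16^k C(m+k−1, m−k)² is asymptotically equivalent to (√2+1)^{4m} / (2^{1/4} √(2πm)); that is, lim_{m→∞} [Σ_{k=1}^m 16^k C(m+k−1, m−k)²] · 2^{1/4} √(2πm) · (√2+1)^{−4m} = 1. -/

import Mathlib

open Filter

/-!
By Parseval, the sum is `16 / (2 * π)` times the integral over `|θ| ≤ π` of `‖B (4 * w ^ 2)‖ ^ 2`,
where `B` is a Morgan–Voyce polynomial and `w = exp (θ * I / 2)`. Writing `w = sinh z` turns
`B (4 * w ^ 2)` into the quotient `sinh (2 * m * z) / sinh (2 * z)`, and `‖w‖ = 1` forces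
`sinh (re z) ^ 2 = |re w| = cos (θ / 2)`. Hence the integrand grows like
`exp (4 * m * arsinh √(cos (θ / 2)))`, up to an error that stays bounded after multiplication by
`cos (θ / 2)`. The exponent has its unique maximum at `θ = 0`, where
`exp (4 * arsinh 1) = (√2 + 1) ^ 4`, and Laplace's method gives the asymptotics: rescaling
`θ = t / √m` leaves the Gaussian `exp (-(√2 / 8) * t ^ 2)`.
-/

open MeasureTheory
open scoped Real Topology

section LaplaceMethod

variable {V E ι : Type*} [NormedAddCommGroup V] [NormedSpace ℝ V] [FiniteDimensional ℝ V]
  [MeasurableSpace V] [BorelSpace V] {μ : Measure V} [μ.IsAddHaarMeasure]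
  [NormedAddCommGroup E] [NormedSpace ℝ E] {l : Filter ι} [l.IsCountablyGenerated]

theorem tendsto_pow_finrank_smul_setIntegral_of_dominated {s : ι → ℝ} {f : ι → V → E}
    {g : V → E} {bound : V → ℝ} {A : Set V} (hA : MeasurableSet A) (hA₀ : A ∈ 𝓝 0)
    (hs : Tendsto s l atTop) (hf : ∀ᶠ i in l, AEStronglyMeasurable (f i) μ)
    (hbound : Integrable bound μ) (hfb : ∀ᶠ i in l, ∀ x ∈ A, ‖f i x‖ ≤ bound (s i • x))
    (hlim : ∀ v, Tendsto (fun i ↦ f i ((s i)⁻¹ • v)) l (𝓝 (g v))) :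
    Tendsto (fun i ↦ s i ^ Module.finrank ℝ V • ∫ x in A, f i x ∂μ) l (𝓝 (∫ v, g v ∂μ)) := by
  have hs₀ := hs.eventually_gt_atTop 0
  have hdom : Tendsto (fun i ↦ ∫ v, A.indicator (f i) ((s i)⁻¹ • v) ∂μ) l
      (𝓝 (∫ v, g v ∂μ)) := by
    refine tendsto_integral_filter_of_dominated_convergence (fun v ↦ ‖bound v‖) ?_ ?_
      hbound.norm (.of_forall fun v ↦ ?_)
    · filter_upwards [hs₀, hf] with i hi hfi
      exact (hfi.indicator hA).comp_quasiMeasurePreserving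
        (Measure.quasiMeasurePreserving_smul μ (inv_ne_zero hi.ne'))
    · filter_upwards [hs₀, hfb] with i hi hfi
      refine .of_forall fun v ↦ ?_
      by_cases hv : (s i)⁻¹ • v ∈ A
      · simpa [hv, smul_inv_smul₀ hi.ne'] using (hfi _ hv).trans (le_abs_self _)
      · simp [hv]
    · have hv : Tendsto (fun i ↦ (s i)⁻¹ • v) l (𝓝 0) := by
        simpa using (tendsto_inv_atTop_zero.comp hs).smul_const v
      refine (hlim v).congr' ?_
      filter_upwards [hv.eventually_mem hA₀] with i hi
      rw [Set.indicator_of_mem hi]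
  refine hdom.congr' ?_
  filter_upwards [hs₀] with i hi
  rw [Measure.integral_comp_inv_smul_of_nonneg μ _ hi.le, integral_indicator hA]

end LaplaceMethod

theorem cos_eq_one_sub_sq_div_two_mul_sinc_sq (x : ℝ) :
    Real.cos x = 1 - x ^ 2 / 2 * Real.sinc (x / 2) ^ 2 := by
  rcases eq_or_ne x 0 with rfl | hx
  · simp
  · rw [Real.sinc_of_ne_zero (by positivity), div_pow, Real.sin_sq_eq_half_sub,
      mul_div_cancel₀ x two_ne_zero]
    field_simp
    ring

theorem tendsto_sq_mul_cos_div_sub_one {ι : Type*} {l : Filter ι} {s : ι → ℝ}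
    (hs : Tendsto s l atTop) (x : ℝ) :
    Tendsto (fun i ↦ s i ^ 2 * (Real.cos (x / s i) - 1)) l (𝓝 (-(x ^ 2 / 2))) := by
  have hsinc : Tendsto (fun i ↦ Real.sinc (x / s i / 2)) l (𝓝 1) := by
    have hx : Tendsto (fun i ↦ x / s i / 2) l (𝓝 0) := by
      simpa using (tendsto_const_nhds.div_atTop hs).div_const 2
    simpa [Function.comp_def] using (Real.continuous_sinc.tendsto 0).comp hx
  have hlim : Tendsto (fun i ↦ -(x ^ 2 / 2) * Real.sinc (x / s i / 2) ^ 2) l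
      (𝓝 (-(x ^ 2 / 2))) := by
    simpa using (hsinc.pow 2).const_mul (-(x ^ 2 / 2))
  refine hlim.congr' ?_
  filter_upwards [hs.eventually_gt_atTop 0] with i hi
  rw [cos_eq_one_sub_sq_div_two_mul_sinc_sq (x / s i)]
  field_simp
  ring

theorem hasDerivAt_arsinh_sqrt {c : ℝ} (hc : 0 < c) :
    HasDerivAt (fun c ↦ Real.arsinh √c) (2 * √(c * (1 + c)))⁻¹ c := by
  convert! (Real.hasDerivAt_sqrt hc.ne').arsinh using 1
  rw [Real.sq_sqrt hc.le, Real.sqrt_mul hc.le]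
  simp [mul_comm, mul_assoc]

theorem arsinh_sqrt_le {c : ℝ} (hc₀ : 0 ≤ c) (hc₁ : c ≤ 1) :
    Real.arsinh √c ≤ Real.arsinh 1 - √2 / 4 * (1 - c) := by
  have hderiv : ∀ x ∈ interior (Set.Icc (0 : ℝ) 1),
      √2 / 4 ≤ deriv (fun c ↦ Real.arsinh √c) x := by
    intro x hx
    rw [interior_Icc] at hx
    rw [(hasDerivAt_arsinh_sqrt hx.1).deriv]
    calc √2 / 4 = (2 * √2)⁻¹ := by field_simp; norm_num
      _ ≤ (2 * √(x * (1 + x)))⁻¹ := by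
        have := mul_pos hx.1 (show 0 < 1 + x by linarith [hx.1])
        gcongr
        nlinarith [hx.1, hx.2]
  have hmean := (convex_Icc (0 : ℝ) 1).mul_sub_le_image_sub_of_le_deriv
    (Real.continuous_arsinh.comp Real.continuous_sqrt).continuousOn
    (fun x hx ↦ (hasDerivAt_arsinh_sqrt
      (by rw [interior_Icc] at hx; exact hx.1)).differentiableAt.differentiableWithinAt)
    hderiv c ⟨hc₀, hc₁⟩ 1 (Set.right_mem_Icc.2 zero_le_one) hc₁
  simp only [Function.comp_apply, Real.sqrt_one] at hmean
  linarith

theorem tendsto_cos_div {ι : Type*} {l : Filter ι} {s : ι → ℝ} (hs : Tendsto s l atTop) (x : ℝ) :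
    Tendsto (fun i ↦ Real.cos (x / s i)) l (𝓝 1) := by
  simpa [Function.comp_def] using
    (Real.continuous_cos.tendsto 0).comp (tendsto_const_nhds.div_atTop hs (a := x))

theorem tendsto_sq_mul_arsinh_sqrt_cos_div_sub {ι : Type*} {l : Filter ι} {s : ι → ℝ}
    (hs : Tendsto s l atTop) (x : ℝ) :
    Tendsto (fun i ↦ s i ^ 2 * (Real.arsinh √(Real.cos (x / s i)) - Real.arsinh 1)) l
      (𝓝 (-(√2 / 8) * x ^ 2)) := by
  have hlim := (hasDerivAt_arsinh_sqrt one_pos).hasFDerivAt.hasFDerivWithinAt.lim (s := Set.univ)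
    (by simpa using (tendsto_cos_div hs x).sub_const 1) (by simp)
    (tendsto_sq_mul_cos_div_sub_one hs x)
  convert! hlim using 2 with i
  · simp
  · norm_num
    field_simp
    rw [Real.sq_sqrt zero_le_two]
    ring

theorem sum_norm_sq_eq_circleAverage (a : ℕ → ℂ) (n : ℕ) :
    ∑ i ∈ Finset.range n, ‖a i‖ ^ 2 =
      Real.circleAverage (fun z ↦ ‖∑ i ∈ Finset.range n, a i * z ^ i‖ ^ 2) 0 1 := by
  let p : Polynomial ℂ := ∑ i ∈ Finset.range n, Polynomial.monomial i (a i)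
  have hcoeff (i : ℕ) : p.coeff i = if i < n then a i else 0 := by
    simp [p, Polynomial.coeff_monomial]
  have hsupp : p.support ⊆ Finset.range n := fun i hi ↦ by
    by_contra h
    simp_all
  calc ∑ i ∈ Finset.range n, ‖a i‖ ^ 2 = ∑ i ∈ Finset.range n, ‖p.coeff i‖ ^ 2 :=
        Finset.sum_congr rfl fun i hi ↦ by rw [hcoeff, if_pos (Finset.mem_range.1 hi)]
    _ = ∑ i ∈ p.support, ‖p.coeff i‖ ^ 2 :=
        (Finset.sum_subset hsupp fun i _ hi ↦ by simp_all).symm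
    _ = _ := by
        rw [p.sum_sq_norm_coeff_eq_circleAverage]
        simp [p, Polynomial.eval_finsetSum]

section Hyperbolic

theorem complex_sinh_surjective : Function.Surjective Complex.sinh := by
  intro w
  obtain ⟨u, hu⟩ := Complex.sin_surjective (w * Complex.I)
  refine ⟨-(u * Complex.I), ?_⟩
  rw [Complex.sinh_neg, Complex.sinh_mul_I, hu, mul_assoc, Complex.I_mul_I]
  ring

theorem norm_sinh_sq (z : ℂ) : ‖Complex.sinh z‖ ^ 2 = Real.sinh z.re ^ 2 + Real.sin z.im ^ 2 := by
  have h : Complex.sinh z = (Real.sinh z.re * Real.cos z.im : ℝ)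
      + (Real.cosh z.re * Real.sin z.im : ℝ) * Complex.I := by
    conv_lhs => rw [← Complex.re_add_im z, Complex.sinh_add, Complex.sinh_mul_I,
      Complex.cosh_mul_I]
    push_cast
    ring
  rw [h, ← Complex.normSq_eq_norm_sq, Complex.normSq_add_mul_I, mul_pow, mul_pow, Real.cosh_sq,
    Real.cos_sq']
  ring

theorem norm_cosh_sq (z : ℂ) : ‖Complex.cosh z‖ ^ 2 = Real.sinh z.re ^ 2 + Real.cos z.im ^ 2 := by
  have h : Complex.cosh z = (Real.cosh z.re * Real.cos z.im : ℝ)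
      + (Real.sinh z.re * Real.sin z.im : ℝ) * Complex.I := by
    conv_lhs => rw [← Complex.re_add_im z, Complex.cosh_add, Complex.sinh_mul_I,
      Complex.cosh_mul_I]
    push_cast
    ring
  rw [h, ← Complex.normSq_eq_norm_sq, Complex.normSq_add_mul_I, mul_pow, mul_pow, Real.cosh_sq,
    Real.cos_sq']
  ring

theorem norm_cosh_le (z : ℂ) : ‖Complex.cosh z‖ ≤ Real.exp |z.re| := by
  have h := norm_add_le (Complex.exp z) (Complex.exp (-z))
  rw [← Complex.two_cosh, norm_mul, Complex.norm_exp, Complex.norm_exp, Complex.norm_two] at h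
  have h₁ := Real.exp_le_exp.2 (le_abs_self z.re)
  have h₂ := Real.exp_le_exp.2 (neg_le_abs z.re)
  rw [Complex.neg_re] at h
  linarith

theorem norm_one_add_sq_of_norm_eq_one {w : ℂ} (hw : ‖w‖ = 1) : ‖1 + w ^ 2‖ = 2 * |w.re| := by
  have h : 1 + w ^ 2 = w * (2 * w.re : ℝ) := by
    rw [← Complex.add_conj, mul_add, Complex.mul_conj, Complex.normSq_eq_norm_sq, hw]
    norm_num
    ring
  rw [h, norm_mul, hw, Complex.norm_real, Real.norm_eq_abs, abs_mul, abs_two, one_mul]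

theorem norm_cosh_sq_of_norm_sinh_eq_one {z : ℂ} (hz : ‖Complex.sinh z‖ = 1) :
    ‖Complex.cosh z‖ ^ 2 = 2 * |(Complex.sinh z).re| := by
  rw [← norm_pow, Complex.cosh_sq, add_comm, norm_one_add_sq_of_norm_eq_one hz]

theorem abs_re_of_norm_sinh_eq_one {z : ℂ} (hz : ‖Complex.sinh z‖ = 1) :
    |z.re| = Real.arsinh √|(Complex.sinh z).re| := by
  have hsq : Real.sinh z.re ^ 2 = |(Complex.sinh z).re| := by
    have h₁ := norm_sinh_sq z
    have h₂ := norm_cosh_sq z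
    rw [hz] at h₁
    rw [norm_cosh_sq_of_norm_sinh_eq_one hz] at h₂
    linarith [Real.sin_sq_add_cos_sq z.im]
  rw [← hsq, Real.sqrt_sq_eq_abs, Real.abs_sinh, Real.arsinh_sinh]

end Hyperbolic

/-- The Morgan–Voyce polynomial `B_{m-1}(x)`, with `B_{-1} = 0`. The index is shifted so that
`m` is also the number of terms. -/
def morganVoyceOdd {R : Type*} [Semiring R] (m : ℕ) (x : R) : R :=
  ∑ j ∈ Finset.range m, ((m + j).choose (2 * j + 1) : R) * x ^ j

/-- The Morgan–Voyce polynomial `b_m(x)`, which forms with `morganVoyceOdd` a pair of sequences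
determined by a coupled first-order recurrence. -/
def morganVoyceEven {R : Type*} [Semiring R] (m : ℕ) (x : R) : R :=
  ∑ j ∈ Finset.range (m + 1), ((m + j).choose (2 * j) : R) * x ^ j

section Recurrence

variable {R : Type*} [Semiring R]

theorem morganVoyceOdd_succ (m : ℕ) (x : R) :
    morganVoyceOdd (m + 1) x = morganVoyceOdd m x + morganVoyceEven m x := by
  have hext : morganVoyceOdd m x =
      ∑ j ∈ Finset.range (m + 1), ((m + j).choose (2 * j + 1) : R) * x ^ j := by
    rw [Finset.sum_range_succ, Nat.choose_eq_zero_of_lt (by omega), Nat.cast_zero, zero_mul,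
      add_zero, morganVoyceOdd]
  rw [hext, morganVoyceOdd, morganVoyceEven, ← Finset.sum_add_distrib]
  refine Finset.sum_congr rfl fun j _ ↦ ?_
  rw [add_right_comm, Nat.choose_succ_succ, Nat.cast_add, add_mul, add_comm]

theorem morganVoyceEven_succ (m : ℕ) (x : R) :
    morganVoyceEven (m + 1) x = morganVoyceEven m x + x * morganVoyceOdd (m + 1) x := by
  have hext : morganVoyceEven m x =
      ∑ j ∈ Finset.range (m + 1), ((m + (j + 1)).choose (2 * (j + 1)) : R) * x ^ (j + 1) + 1 := by
    rw [Finset.sum_range_succ, Nat.choose_eq_zero_of_lt (by omega), Nat.cast_zero, zero_mul,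
      add_zero, morganVoyceEven, Finset.sum_range_succ']
    simp
  rw [hext, morganVoyceEven, morganVoyceOdd, Finset.sum_range_succ', Finset.mul_sum,
    add_right_comm (Finset.sum _ _), ← Finset.sum_add_distrib]
  congr 1
  · refine Finset.sum_congr rfl fun j _ ↦ ?_
    rw [show m + 1 + (j + 1) = m + (j + 1) + 1 by ring, show 2 * (j + 1) = 2 * j + 1 + 1 by ring,
      Nat.choose_succ_succ, show m + (j + 1) = m + 1 + j by ring, Nat.cast_add, add_mul, add_comm,
      ← mul_assoc x, ← Nat.cast_comm _ x, mul_assoc, pow_succ']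
  · simp

end Recurrence

theorem morganVoyce_four_mul_sinh_sq (z : ℂ) (m : ℕ) :
    morganVoyceOdd m (4 * Complex.sinh z ^ 2) * Complex.sinh (2 * z)
        = Complex.sinh (m * (2 * z)) ∧
      morganVoyceEven m (4 * Complex.sinh z ^ 2) = Complex.cosh (m * (2 * z))
        + 2 * Complex.sinh z ^ 2 * morganVoyceOdd m (4 * Complex.sinh z ^ 2) := by
  induction m with
  | zero => simp [morganVoyceOdd, morganVoyceEven]
  | succ m ih =>
    obtain ⟨hodd, heven⟩ := ih
    have hcosh : Complex.cosh (2 * z) = 1 + 2 * Complex.sinh z ^ 2 := by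
      rw [Complex.cosh_two_mul, Complex.cosh_sq]
      ring
    rw [morganVoyceEven_succ, morganVoyceOdd_succ, heven, Nat.cast_succ, add_one_mul,
      Complex.sinh_add, Complex.cosh_add, ← hodd, hcosh]
    refine ⟨by ring, ?_⟩
    linear_combination -morganVoyceOdd m (4 * Complex.sinh z ^ 2) *
      (Complex.sinh_sq (2 * z) + (Complex.cosh (2 * z) + 1 + 2 * Complex.sinh z ^ 2) * hcosh)

theorem morganVoyceOdd_mul_sinh (z : ℂ) (m : ℕ) :
    morganVoyceOdd m (4 * Complex.sinh z ^ 2) * Complex.sinh (2 * z)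
      = Complex.sinh (m * (2 * z)) :=
  (morganVoyce_four_mul_sinh_sq z m).1

theorem morganVoyceOdd_succ_four_mul_sinh_sq (z : ℂ) (m : ℕ) :
    morganVoyceOdd (m + 1) (4 * Complex.sinh z ^ 2)
      = Complex.cosh (2 * z) * morganVoyceOdd m (4 * Complex.sinh z ^ 2)
        + Complex.cosh (m * (2 * z)) := by
  rw [morganVoyceOdd_succ, (morganVoyce_four_mul_sinh_sq z m).2, Complex.cosh_two_mul,
    Complex.cosh_sq]
  ring

theorem norm_morganVoyceOdd_four_mul_sinh_sq_le (z : ℂ) (m : ℕ) :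
    ‖morganVoyceOdd m (4 * Complex.sinh z ^ 2)‖ ≤ m * Real.exp (2 * m * |z.re|) := by
  induction m with
  | zero => simp [morganVoyceOdd]
  | succ m ih =>
    have h₁ : ‖Complex.cosh (2 * z)‖ ≤ Real.exp (2 * |z.re|) := by
      simpa [abs_mul] using norm_cosh_le (2 * z)
    have h₂ : ‖Complex.cosh (m * (2 * z))‖ ≤ Real.exp (2 * (m + 1 : ℕ) * |z.re|) := by
      refine (norm_cosh_le _).trans (Real.exp_le_exp.2 ?_)
      rw [show (m : ℂ) * (2 * z) = (2 * m : ℝ) * z by push_cast; ring, Complex.re_ofReal_mul,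
        abs_mul, abs_of_nonneg (by positivity)]
      gcongr
      simp
    rw [morganVoyceOdd_succ_four_mul_sinh_sq]
    calc ‖Complex.cosh (2 * z) * morganVoyceOdd m (4 * Complex.sinh z ^ 2)
          + Complex.cosh (m * (2 * z))‖
        ≤ Real.exp (2 * |z.re|) * (m * Real.exp (2 * m * |z.re|))
          + Real.exp (2 * (m + 1 : ℕ) * |z.re|) := by
          grw [norm_add_le, norm_mul, h₁, ih, h₂]
      _ = (m + 1 : ℕ) * Real.exp (2 * (m + 1 : ℕ) * |z.re|) := by
          rw [mul_left_comm, ← Real.exp_add]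
          push_cast
          ring_nf

theorem norm_morganVoyceOdd_le {w : ℂ} (hw : ‖w‖ = 1) (m : ℕ) :
    ‖morganVoyceOdd m (4 * w ^ 2)‖ ≤ m * Real.exp (2 * m * Real.arsinh √|w.re|) := by
  obtain ⟨z, rfl⟩ := complex_sinh_surjective w
  rw [← abs_re_of_norm_sinh_eq_one hw]
  exact norm_morganVoyceOdd_four_mul_sinh_sq_le z m

theorem abs_re_mul_norm_morganVoyceOdd_sq_sub_exp_le {w : ℂ} (hw : ‖w‖ = 1) (m : ℕ) :
    |16 * |w.re| * ‖morganVoyceOdd m (4 * w ^ 2)‖ ^ 2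
      - Real.exp (4 * m * Real.arsinh √|w.re|) / 2| ≤ 3 / 2 := by
  obtain ⟨z, rfl⟩ := complex_sinh_surjective w
  rw [← abs_re_of_norm_sinh_eq_one hw]
  have hre : (m * (2 * z)).re = m * (2 * z.re) := by simp
  have hnorm : 16 * |(Complex.sinh z).re| * ‖morganVoyceOdd m (4 * Complex.sinh z ^ 2)‖ ^ 2
      = 2 * ‖Complex.sinh (m * (2 * z))‖ ^ 2 := by
    rw [← morganVoyceOdd_mul_sinh, Complex.sinh_two_mul, norm_mul, norm_mul, norm_mul, hw,
      Complex.norm_two, mul_one, mul_pow, mul_pow, norm_cosh_sq_of_norm_sinh_eq_one hw]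
    ring
  have hsinh : 2 * Real.sinh (m * (2 * z.re)) ^ 2
      = (Real.exp (4 * m * |z.re|) + Real.exp (-(4 * m * |z.re|))) / 2 - 1 := by
    rw [← Real.cosh_eq, ← sq_abs, Real.abs_sinh, Real.sinh_sq, abs_mul, abs_mul, Nat.abs_cast,
      abs_two, show 4 * m * |z.re| = 2 * (m * (2 * |z.re|)) by ring, Real.cosh_two_mul,
      Real.sinh_sq]
    ring
  have hexp : Real.exp (-(4 * m * |z.re|)) ≤ 1 :=
    Real.exp_le_one_iff.2 (neg_nonpos.2 (by positivity))
  have hexp₀ := Real.exp_pos (-(4 * m * |z.re|))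
  have hsin := Real.sin_sq_le_one (m * (2 * z)).im
  have hsin₀ := sq_nonneg (Real.sin (m * (2 * z)).im)
  rw [hnorm, norm_sinh_sq, hre, mul_add, hsinh, abs_le]
  constructor <;> linarith

theorem sum_Icc_pow_mul_choose_sq {R : Type*} [CommSemiring R] (x : R) (m : ℕ) :
    ∑ k ∈ Finset.Icc 1 m, x ^ k * ((m + k - 1).choose (m - k) : R) ^ 2
      = x * ∑ j ∈ Finset.range m, x ^ j * ((m + j).choose (2 * j + 1) : R) ^ 2 := by
  rw [← Finset.Ico_add_one_right_eq_Icc, Finset.sum_Ico_eq_sum_range, Nat.add_sub_cancel,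
    Finset.mul_sum]
  refine Finset.sum_congr rfl fun j hj ↦ ?_
  have hj := Finset.mem_range.1 hj
  rw [show m + (1 + j) - 1 = m + j by omega,
    Nat.choose_symm_of_eq_add (show m + j = (m - (1 + j)) + (2 * j + 1) by omega), add_comm 1 j,
    pow_succ', mul_assoc]

theorem sum_sq_pow_mul_choose_sq_eq_setIntegral (x : ℝ) (m : ℕ) :
    ∑ k ∈ Finset.Icc 1 m, (x ^ 2) ^ k * ((m + k - 1).choose (m - k) : ℝ) ^ 2
      = x ^ 2 / (2 * π) * ∫ θ in Set.Ioc (-π) π,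
          ‖morganVoyceOdd m (x * Complex.exp (θ * Complex.I))‖ ^ 2 := by
  calc ∑ k ∈ Finset.Icc 1 m, (x ^ 2) ^ k * ((m + k - 1).choose (m - k) : ℝ) ^ 2
      = x ^ 2 * ∑ j ∈ Finset.range m, ‖((m + j).choose (2 * j + 1) * x ^ j : ℂ)‖ ^ 2 := by
        rw [sum_Icc_pow_mul_choose_sq]
        refine congrArg _ (Finset.sum_congr rfl fun j _ ↦ ?_)
        rw [norm_mul, norm_pow, Complex.norm_natCast, Complex.norm_real, Real.norm_eq_abs, mul_pow,
          pow_right_comm |x|, sq_abs, mul_comm]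
    _ = x ^ 2 * Real.circleAverage (fun z ↦ ‖morganVoyceOdd m (x * z)‖ ^ 2) 0 1 := by
        simp only [sum_norm_sq_eq_circleAverage, morganVoyceOdd, mul_pow, mul_assoc]
    _ = _ := by
        rw [Real.circleAverage_eq_integral_add (-π), intervalIntegral.integral_comp_add_right
          (fun θ ↦ ‖morganVoyceOdd m (x * circleMap 0 1 θ)‖ ^ 2), zero_add,
          show 2 * π + -π = π by ring, intervalIntegral.integral_of_le (by linarith [Real.pi_pos])]
        simp only [circleMap_zero, Complex.ofReal_one, one_mul, smul_eq_mul]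
        ring

/-- The integrand of Parseval's formula for the sum, divided by the growth rate
`exp (4 * m * arsinh 1) = (√2 + 1) ^ (4 * m)` attained at the peak `θ = 0`. -/
noncomputable def normalizedIntegrand (m : ℕ) (θ : ℝ) : ℝ :=
  16 * ‖morganVoyceOdd m (4 * Complex.exp (θ * Complex.I))‖ ^ 2
    * Real.exp (-(4 * m * Real.arsinh 1))

theorem continuous_normalizedIntegrand (m : ℕ) : Continuous (normalizedIntegrand m) := by
  unfold normalizedIntegrand morganVoyceOdd
  fun_prop

theorem normalizedIntegrand_nonneg (m : ℕ) (θ : ℝ) : 0 ≤ normalizedIntegrand m θ := by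
  unfold normalizedIntegrand
  positivity

theorem exp_four_mul_arsinh_one (m : ℕ) :
    Real.exp (4 * m * Real.arsinh 1) = (√2 + 1) ^ (4 * m) := by
  rw [show (4 * m * Real.arsinh 1) = (4 * m : ℕ) * Real.arsinh 1 by push_cast; ring,
    Real.exp_nat_mul, Real.exp_arsinh]
  norm_num [add_comm]

theorem sum_sixteen_pow_mul_choose_sq_eq (m : ℕ) :
    ∑ k ∈ Finset.Icc 1 m, (16 : ℝ) ^ k * ((m + k - 1).choose (m - k) : ℝ) ^ 2
      = (√2 + 1) ^ (4 * m) / (2 * π) * ∫ θ in Set.Ioc (-π) π, normalizedIntegrand m θ := by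
  have h := sum_sq_pow_mul_choose_sq_eq_setIntegral 4 m
  norm_num only [Complex.ofReal_ofNat] at h
  rw [h]
  unfold normalizedIntegrand
  rw [integral_mul_const, integral_const_mul, Real.exp_neg, exp_four_mul_arsinh_one]
  generalize ∫ θ in Set.Ioc (-π) π, ‖morganVoyceOdd m (4 * Complex.exp (θ * Complex.I))‖ ^ 2 = I
  field_simp

section HalfAngle

variable {θ : ℝ}

theorem normalizedIntegrand_le_of_cos_nonneg (hθ : 0 ≤ Real.cos (θ / 2)) (m : ℕ) :
    normalizedIntegrand m θ
      ≤ 16 * m ^ 2 * Real.exp (4 * m * (Real.arsinh √(Real.cos (θ / 2)) - Real.arsinh 1)) := by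
  have hw := norm_morganVoyceOdd_le (Complex.norm_exp_ofReal_mul_I (θ / 2)) m
  rw [Complex.exp_ofReal_mul_I_re, abs_of_nonneg hθ, ← Complex.exp_nat_mul,
    show ((2 : ℕ) : ℂ) * ((θ / 2 : ℝ) * Complex.I) = θ * Complex.I by push_cast; ring] at hw
  unfold normalizedIntegrand
  calc 16 * ‖morganVoyceOdd m (4 * Complex.exp (θ * Complex.I))‖ ^ 2
        * Real.exp (-(4 * m * Real.arsinh 1))
      ≤ 16 * (m * Real.exp (2 * m * Real.arsinh √(Real.cos (θ / 2)))) ^ 2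
        * Real.exp (-(4 * m * Real.arsinh 1)) := by gcongr
    _ = _ := by
        rw [mul_pow, ← Real.exp_nat_mul, ← mul_assoc, mul_assoc, ← Real.exp_add]
        push_cast
        ring_nf

theorem abs_cos_mul_normalizedIntegrand_sub_le (hθ : 0 ≤ Real.cos (θ / 2)) (m : ℕ) :
    |Real.cos (θ / 2) * normalizedIntegrand m θ
        - Real.exp (4 * m * (Real.arsinh √(Real.cos (θ / 2)) - Real.arsinh 1)) / 2|
      ≤ 3 / 2 * Real.exp (-(4 * m * Real.arsinh 1)) := by
  have hw := abs_re_mul_norm_morganVoyceOdd_sq_sub_exp_le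
    (Complex.norm_exp_ofReal_mul_I (θ / 2)) m
  rw [Complex.exp_ofReal_mul_I_re, abs_of_nonneg hθ, ← Complex.exp_nat_mul,
    show ((2 : ℕ) : ℂ) * ((θ / 2 : ℝ) * Complex.I) = θ * Complex.I by push_cast; ring] at hw
  unfold normalizedIntegrand
  rw [mul_sub (4 * m : ℝ), sub_eq_add_neg (4 * (m : ℝ) * _), Real.exp_add]
  refine le_trans (le_of_eq ?_) (mul_le_mul_of_nonneg_right hw (Real.exp_pos _).le)
  rw [← Real.abs_exp (-(4 * m * Real.arsinh 1)), ← abs_mul, Real.abs_exp]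
  ring_nf

end HalfAngle

theorem half_angle_arsinh_exponent_le {θ : ℝ} (hθ : |θ| ≤ π) :
    Real.arsinh √(Real.cos (θ / 2)) - Real.arsinh 1 ≤ -(√2 / (8 * π ^ 2)) * θ ^ 2 := by
  have hcos := Real.cos_nonneg_of_neg_pi_div_two_le_of_le (x := θ / 2)
    (by linarith [neg_le_of_abs_le hθ]) (by linarith [le_of_abs_le hθ])
  have hquad : Real.cos (θ / 2) ≤ 1 - 2 / π ^ 2 * (θ / 2) ^ 2 :=
    Real.cos_le_one_sub_mul_cos_sq (by rw [abs_div, abs_two]; linarith [abs_nonneg θ])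
  calc Real.arsinh √(Real.cos (θ / 2)) - Real.arsinh 1
      ≤ -(√2 / 4 * (1 - Real.cos (θ / 2))) := by
        linarith [arsinh_sqrt_le hcos (Real.cos_le_one _)]
    _ ≤ -(√2 / 4 * (2 / π ^ 2 * (θ / 2) ^ 2)) := by
        gcongr
        linarith
    _ = -(√2 / (8 * π ^ 2)) * θ ^ 2 := by ring

theorem normalizedIntegrand_le {θ : ℝ} (hθ : |θ| ≤ π) (m : ℕ) :
    normalizedIntegrand m θ
      ≤ (4 + (√m * θ) ^ 4) * Real.exp (-(√2 / (2 * π ^ 2)) * (√m * θ) ^ 2) := by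
  set E := Real.exp (4 * m * (Real.arsinh √(Real.cos (θ / 2)) - Real.arsinh 1))
  have hcos := Real.cos_nonneg_of_neg_pi_div_two_le_of_le (x := θ / 2)
    (by linarith [neg_le_of_abs_le hθ]) (by linarith [le_of_abs_le hθ])
  have hsq : (√m * θ) ^ 2 = m * θ ^ 2 := by rw [mul_pow, Real.sq_sqrt m.cast_nonneg]
  have hexp : E ≤ Real.exp (-(√2 / (2 * π ^ 2)) * (√m * θ) ^ 2) := by
    rw [hsq]
    refine Real.exp_le_exp.2 ?_
    calc _ ≤ 4 * m * (-(√2 / (8 * π ^ 2)) * θ ^ 2) := by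
          gcongr
          exact half_angle_arsinh_exponent_le hθ
      _ = _ := by ring
  suffices normalizedIntegrand m θ ≤ (4 + (√m * θ) ^ 4) * E from this.trans (by gcongr)
  rcases le_total (1 / 2) (Real.cos (θ / 2)) with hnear | hfar
  · have hdecay : Real.exp (-(4 * m * Real.arsinh 1)) ≤ E := by
      refine Real.exp_le_exp.2 ?_
      have := mul_nonneg (show (0 : ℝ) ≤ 4 * m by positivity)
        (Real.arsinh_nonneg_iff.2 (Real.sqrt_nonneg (Real.cos (θ / 2))))
      linarith
    have herr := le_of_abs_le (abs_cos_mul_normalizedIntegrand_sub_le hcos m)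
    calc normalizedIntegrand m θ
        ≤ 2 * (Real.cos (θ / 2) * normalizedIntegrand m θ) := by
          nlinarith [normalizedIntegrand_nonneg m θ]
      _ ≤ (4 + 0) * E := by linarith
      _ ≤ (4 + (√m * θ) ^ 4) * E := by gcongr; positivity
  -- Far from the peak `(√m * θ) ^ 4 ≥ 16 * m ^ 2` absorbs the factor of the crude bound.
  · have hθ₂ : 4 ≤ θ ^ 2 := by linarith [Real.one_sub_sq_div_two_le_cos (x := θ / 2)]
    calc normalizedIntegrand m θ ≤ 16 * m ^ 2 * E := normalizedIntegrand_le_of_cos_nonneg hcos m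
      _ = (0 + (m * 4) ^ 2) * E := by ring
      _ ≤ (4 + (m * θ ^ 2) ^ 2) * E := by gcongr; norm_num
      _ = (4 + (√m * θ) ^ 4) * E := by rw [← hsq]; ring

theorem integrable_const_add_pow_mul_exp_neg_mul_sq {b : ℝ} (hb : 0 < b) (c : ℝ) (n : ℕ) :
    Integrable fun t : ℝ ↦ (c + t ^ n) * Real.exp (-b * t ^ 2) := by
  have hpow := integrable_rpow_mul_exp_neg_mul_sq hb (s := n)
    (neg_one_lt_zero.trans_le n.cast_nonneg)
  simp only [Real.rpow_natCast] at hpow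
  simp only [add_mul]
  exact ((integrable_exp_neg_mul_sq hb).const_mul c).add hpow

theorem tendsto_sqrt_natCast_atTop : Tendsto (fun m : ℕ ↦ √(m : ℝ)) atTop atTop :=
  Real.tendsto_sqrt_atTop.comp tendsto_natCast_atTop_atTop

theorem tendsto_normalizedIntegrand (t : ℝ) :
    Tendsto (fun m : ℕ ↦ normalizedIntegrand m (t / √m)) atTop
      (𝓝 (Real.exp (-(√2 / 8) * t ^ 2) / 2)) := by
  have hcos : Tendsto (fun m : ℕ ↦ Real.cos (t / √m / 2)) atTop (𝓝 1) := by
    simpa only [div_right_comm t] using tendsto_cos_div tendsto_sqrt_natCast_atTop (t / 2)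
  have hpos : ∀ᶠ m : ℕ in atTop, 0 < Real.cos (t / √m / 2) := hcos.eventually_const_lt one_pos
  have hmain : Tendsto (fun m : ℕ ↦
      Real.exp (4 * m * (Real.arsinh √(Real.cos (t / √m / 2)) - Real.arsinh 1)) / 2) atTop
      (𝓝 (Real.exp (-(√2 / 8) * t ^ 2) / 2)) := by
    have :=
      (tendsto_sq_mul_arsinh_sqrt_cos_div_sub tendsto_sqrt_natCast_atTop (t / 2)).const_mul 4
    simp only [Real.sq_sqrt (Nat.cast_nonneg _)] at this
    rw [show 4 * (-(√2 / 8) * (t / 2) ^ 2) = -(√2 / 8) * t ^ 2 by ring] at this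
    simpa only [Function.comp_def, ← mul_assoc, div_right_comm t 2] using
      ((Real.continuous_exp.tendsto _).comp this).div_const 2
  have herr : Tendsto (fun m : ℕ ↦ 3 / 2 * Real.exp (-(4 * m * Real.arsinh 1))) atTop (𝓝 0) := by
    have : Tendsto (fun m : ℕ ↦ 4 * (m : ℝ) * Real.arsinh 1) atTop atTop :=
      (tendsto_natCast_atTop_atTop.const_mul_atTop four_pos).atTop_mul_const
        (Real.arsinh_pos_iff.2 one_pos)
    simpa [Function.comp_def] using
      (Real.tendsto_exp_neg_atTop_nhds_zero.comp this).const_mul (3 / 2)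
  have hdiff := squeeze_zero_norm' (hpos.mono fun m hm ↦
    (Real.norm_eq_abs _).trans_le (abs_cos_mul_normalizedIntegrand_sub_le hm.le m)) herr
  have hquot := (hdiff.add hmain).div hcos one_ne_zero
  simp only [sub_add_cancel, zero_add, div_one] at hquot
  refine hquot.congr' (hpos.mono fun m hm ↦ ?_)
  simp [hm.ne']

theorem tendsto_sqrt_mul_integral_normalizedIntegrand :
    Tendsto (fun m : ℕ ↦ √m * ∫ θ in Set.Ioc (-π) π, normalizedIntegrand m θ) atTop
      (𝓝 (√(π * √2))) := by
  have hgauss : ∫ t : ℝ, Real.exp (-(√2 / 8) * t ^ 2) / 2 = √(π * √2) := by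
    have h : π / (√2 / 8) = 2 ^ 2 * (π * √2) := by
      field_simp
      norm_num
    rw [integral_div, integral_gaussian, h, Real.sqrt_mul (by positivity),
      Real.sqrt_sq zero_le_two, mul_div_cancel_left₀ _ two_ne_zero]
  have hlaplace := tendsto_pow_finrank_smul_setIntegral_of_dominated (μ := volume)
    measurableSet_Ioc (Ioc_mem_nhds (neg_lt_zero.2 Real.pi_pos) Real.pi_pos)
    tendsto_sqrt_natCast_atTop
    (.of_forall fun m ↦ (continuous_normalizedIntegrand m).aestronglyMeasurable)
    (integrable_const_add_pow_mul_exp_neg_mul_sq (b := √2 / (2 * π ^ 2)) (by positivity) 4 4)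
    (.of_forall fun m θ hθ ↦ by
      rw [Real.norm_of_nonneg (normalizedIntegrand_nonneg m θ)]
      exact normalizedIntegrand_le (abs_le.2 ⟨hθ.1.le, hθ.2⟩) m)
    (fun t ↦ by simpa only [smul_eq_mul, inv_mul_eq_div] using tendsto_normalizedIntegrand t)
  simpa only [Module.finrank_self, pow_one, smul_eq_mul, hgauss] using hlaplace

theorem sqrt_pi_mul_sqrt_two_mul_eq :
    √(π * √2) * ((2 : ℝ) ^ ((1 : ℝ) / 4) * √(2 * π) / (2 * π)) = 1 := by
  have hroot : (2 : ℝ) ^ ((1 : ℝ) / 4) = √√2 := by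
    rw [Real.sqrt_eq_rpow, Real.sqrt_eq_rpow, ← Real.rpow_mul zero_le_two]
    norm_num
  have h : √(π * √2) * √√2 * √(2 * π) = 2 * π := by
    rw [← Real.sqrt_mul (by positivity), ← Real.sqrt_mul (by positivity), mul_assoc π,
      Real.mul_self_sqrt (by positivity), mul_comm π, Real.sqrt_mul_self (by positivity)]
  rw [hroot, ← mul_div_assoc, ← mul_assoc, h, div_self (by positivity)]

/-- As `m → ∞`, `Σ_{k=1}^m 16^k C(m+k-1, m-k)² ~ (√2+1)^{4m} / (2^{1/4} √(2πm))`. -/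
theorem variance_sum_asymptotics :
    Tendsto (fun m : ℕ =>
      (∑ k ∈ Finset.Icc 1 m, (16 : ℝ) ^ k * (((m + k - 1).choose (m - k) : ℝ)) ^ 2)
        * (2 : ℝ) ^ ((1 : ℝ) / 4) * Real.sqrt (2 * Real.pi * m)
        * ((Real.sqrt 2 + 1) ^ (4 * m))⁻¹)
      atTop (nhds 1) := by
  have hlim := tendsto_sqrt_mul_integral_normalizedIntegrand.mul_const
    ((2 : ℝ) ^ ((1 : ℝ) / 4) * √(2 * π) / (2 * π))
  rw [sqrt_pi_mul_sqrt_two_mul_eq] at hlim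
  refine hlim.congr fun m ↦ ?_
  rw [sum_sixteen_pow_mul_choose_sq_eq, Real.sqrt_mul (by positivity) (m : ℝ)]
  field_simp
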